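/- A griddable permutation class C lies in Grid(M) for some matrix M with entries in {0, 1, −1} whose bipartite graph G(M) is a matching if and only if C does not contain arbitrarily long alternations (vertical or horizontal). -/

import Mathlib

/-- `σ ≤ π`: the permutation `π` contains the pattern `σ`, i.e. `π` has a subsequence
in the same relative order as `σ`. -/
def PermContains {k n : ℕ} (σ : Equiv.Perm (Fin k)) (π : Equiv.Perm (Fin n)) : Prop :=
  ∃ f : Fin k → Fin n, StrictMono f ∧ ∀ i j : Fin k, σ i < σ j ↔ π (f i) < π (f j)

/-- A permutation class: a set of permutations (of each length) closed downward
under the containment order. -/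
def IsPermClass (C : ∀ n : ℕ, Set (Equiv.Perm (Fin n))) : Prop :=
  ∀ (k n : ℕ) (σ : Equiv.Perm (Fin k)) (π : Equiv.Perm (Fin n)),
    π ∈ C n → PermContains σ π → σ ∈ C k
/-- The point `i` (with value `π i`) lies in the block of the gridding `(c, r)`
indexed by column `k` and row `l`. -/
def InBlock {n t u : ℕ} (π : Equiv.Perm (Fin n)) (c : Fin (t + 1) → ℕ) (r : Fin (u + 1) → ℕ)
    (k : Fin t) (l : Fin u) (i : Fin n) : Prop :=
  c k.castSucc ≤ (i : ℕ) ∧ (i : ℕ) < c k.succ ∧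
    r l.castSucc ≤ (π i : ℕ) ∧ (π i : ℕ) < r l.succ

/-- `(c, r)` is an `M`-gridding of `π`: each block is increasing, decreasing or empty
according to the corresponding entry of the `t × u` matrix `M` (entries in {0, 1, -1},
columns indexed by `Fin t`, rows by `Fin u`). -/
def IsGridding {n t u : ℕ} (M : Fin t → Fin u → SignType) (π : Equiv.Perm (Fin n))
    (c : Fin (t + 1) → ℕ) (r : Fin (u + 1) → ℕ) : Prop :=
  Monotone c ∧ Monotone r ∧ c 0 = 0 ∧ c (Fin.last t) = n ∧ r 0 = 0 ∧ r (Fin.last u) = n ∧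
    ∀ (k : Fin t) (l : Fin u),
      (M k l = 1 → ∀ i j : Fin n,
        InBlock π c r k l i → InBlock π c r k l j → i < j → π i < π j) ∧
      (M k l = -1 → ∀ i j : Fin n,
        InBlock π c r k l i → InBlock π c r k l j → i < j → π j < π i) ∧
      (M k l = 0 → ∀ i : Fin n, ¬ InBlock π c r k l i)

/-- `π ∈ Grid(M)`: the permutation `π` possesses an `M`-gridding. -/
def InGrid {n t u : ℕ} (M : Fin t → Fin u → SignType) (π : Equiv.Perm (Fin n)) : Prop :=
  ∃ c r, IsGridding M π c r
/-- The bipartite graph `G(M)` is a matching: every vertex (column or row) is incident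
to at most one edge, i.e. every column and every row of `M` has at most one nonzero entry. -/
def IsMatchingMat {t u : ℕ} (M : Fin t → Fin u → SignType) : Prop :=
  (∀ (k : Fin t) (l l' : Fin u), M k l ≠ 0 → M k l' ≠ 0 → l = l') ∧
  (∀ (k k' : Fin t) (l : Fin u), M k l ≠ 0 → M k' l ≠ 0 → k = k')



/-- A vertical alternation: a permutation of even length `n = 2m` such that either every
value in an odd position is smaller than every value in an even position, or vice versa
(positions here are 0-indexed, so "odd positions" are those with index `≡ 0 mod 2`). -/
def IsVerticalAlternation {n : ℕ} (π : Equiv.Perm (Fin n)) : Prop :=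
  (∃ m : ℕ, n = 2 * m) ∧
    ((∀ i j : Fin n, (i : ℕ) % 2 = 0 → (j : ℕ) % 2 = 1 → π i < π j) ∨
     (∀ i j : Fin n, (i : ℕ) % 2 = 0 → (j : ℕ) % 2 = 1 → π j < π i))

/-- The class `C` contains arbitrarily long alternations (vertical or horizontal, a
horizontal alternation being the inverse of a vertical one). -/
def ContainsArbitrarilyLongAlternations (C : ∀ n : ℕ, Set (Equiv.Perm (Fin n))) : Prop :=
  ∀ m : ℕ, ∃ (n : ℕ) (π : Equiv.Perm (Fin n)), π ∈ C n ∧ m ≤ n ∧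
    (IsVerticalAlternation π ∨ IsVerticalAlternation π⁻¹)

lemma perm_inv {n : ℕ} (π : Equiv.Perm (Fin n)) (v : Fin n) : π (π⁻¹ v) = v := by simp

/-- Functional form of griddings. -/
def FGrid {n t u : ℕ} (M : Fin t → Fin u → SignType) (π : Equiv.Perm (Fin n)) : Prop :=
  ∃ (f : Fin n → Fin t) (g : Fin n → Fin u), Monotone f ∧ Monotone g ∧
    (∀ i, M (f i) (g (π i)) ≠ 0) ∧
    ∀ i j, i < j → f i = f j → g (π i) = g (π j) →
      (M (f i) (g (π i)) = 1 → π i < π j) ∧ (M (f i) (g (π i)) = -1 → π j < π i)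

lemma exists_slice {n t : ℕ} (c : Fin (t + 1) → ℕ) (hc : Monotone c) (h0 : c 0 = 0)
    (h1 : c (Fin.last t) = n) :
    ∃ f : Fin n → Fin t, Monotone f ∧
      ∀ i : Fin n, c (f i).castSucc ≤ (i : ℕ) ∧ (i : ℕ) < c (f i).succ := by
  have key : ∀ i : Fin n, ∃ k : Fin t, c k.castSucc ≤ (i : ℕ) ∧ (i : ℕ) < c k.succ := by
    intro i
    by_contra hcon
    push Not at hcon
    have : ∀ k : Fin (t + 1), c k ≤ i := by
      intro k
      induction k using Fin.induction with
      | zero => omega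
      | succ k ih => exact hcon k ih
    have := this (Fin.last t)
    have := i.isLt
    omega
  choose f hf using key
  refine ⟨f, ?_, hf⟩
  intro i j hij
  by_contra hlt
  push Not at hlt
  have h : c (f j).succ ≤ c (f i).castSucc := by
    apply hc
    simp only [Fin.le_def, Fin.lt_def, Fin.val_succ, Fin.val_castSucc] at *
    omega
  have h2 := hf i
  have h3 := hf j
  have : (i : ℕ) ≤ j := hij
  omega

lemma lt_card_iff {n t : ℕ} (f : Fin n → Fin t) (hf : Monotone f) (k : ℕ) (i : Fin n) :
    (i : ℕ) < (Finset.univ.filter fun j => (f j : ℕ) < k).card ↔ (f i : ℕ) < k := by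
  constructor
  · intro h
    by_contra hcon
    have hsub : (Finset.univ.filter fun j => (f j : ℕ) < k) ⊆ Finset.Iio i := by
      intro j hj
      simp only [Finset.mem_filter, Finset.mem_univ, true_and, Finset.mem_Iio] at *
      by_contra hji
      have : f i ≤ f j := hf (not_lt.mp hji)
      have : (f i : ℕ) ≤ f j := this
      omega
    have := Finset.card_le_card hsub
    rw [Fin.card_Iio] at this
    omega
  · intro h
    have hsub : Finset.Iic i ⊆ (Finset.univ.filter fun j => (f j : ℕ) < k) := by
      intro j hj
      simp only [Finset.mem_filter, Finset.mem_univ, true_and, Finset.mem_Iic] at *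
      have : (f j : ℕ) ≤ f i := hf hj
      omega
    have := Finset.card_le_card hsub
    rw [Fin.card_Iic] at this
    omega

lemma exists_cuts {n t : ℕ} (f : Fin n → Fin t) (hf : Monotone f) :
    ∃ c : Fin (t + 1) → ℕ, Monotone c ∧ c 0 = 0 ∧ c (Fin.last t) = n ∧
      ∀ (i : Fin n) (k : Fin t), c k.castSucc ≤ (i : ℕ) ∧ (i : ℕ) < c k.succ ↔ f i = k := by
  refine ⟨fun k => (Finset.univ.filter fun j => (f j : ℕ) < k).card, ?_, ?_, ?_, ?_⟩
  · intro k l hkl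
    apply Finset.card_le_card
    intro j
    simp only [Finset.mem_filter, Finset.mem_univ, true_and]
    intro h
    have : (k : ℕ) ≤ l := hkl
    omega
  · simp
  · simp
  · intro i k
    rw [← not_lt, lt_card_iff f hf, lt_card_iff f hf, Fin.ext_iff]
    simp only [Fin.val_succ, Fin.val_castSucc]
    omega

lemma inGrid_iff {n t u : ℕ} (M : Fin t → Fin u → SignType) (π : Equiv.Perm (Fin n)) :
    InGrid M π ↔ FGrid M π := by
  constructor
  · rintro ⟨c, r, hc, hr, c0, c1, r0, r1, h⟩
    obtain ⟨f, hf, hf'⟩ := exists_slice c hc c0 c1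
    obtain ⟨g, hg, hg'⟩ := exists_slice r hr r0 r1
    have hb : ∀ i, InBlock π c r (f i) (g (π i)) i := fun i =>
      ⟨(hf' i).1, (hf' i).2, (hg' (π i)).1, (hg' (π i)).2⟩
    refine ⟨f, g, hf, hg, fun i h0 => (h _ _).2.2 h0 i (hb i), ?_⟩
    intro i j hij h1 h2
    have hj := hb j
    rw [← h1, ← h2] at hj
    exact ⟨fun h3 => (h _ _).1 h3 i j (hb i) hj hij, fun h3 => (h _ _).2.1 h3 i j (hb i) hj hij⟩
  · rintro ⟨f, g, hf, hg, h0, h⟩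
    obtain ⟨c, hc, c0, c1, hc'⟩ := exists_cuts f hf
    obtain ⟨r, hr, r0, r1, hr'⟩ := exists_cuts g hg
    have hb : ∀ i k l, InBlock π c r k l i → f i = k ∧ g (π i) = l := fun i k l hi =>
      ⟨(hc' i k).1 ⟨hi.1, hi.2.1⟩, (hr' (π i) l).1 hi.2.2⟩
    refine ⟨c, r, hc, hr, c0, c1, r0, r1, ?_⟩
    intro k l
    refine ⟨?_, ?_, ?_⟩
    · intro hM i j hi hj hij
      obtain ⟨rfl, rfl⟩ := hb i k l hi
      obtain ⟨h1, h2⟩ := hb j _ _ hj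
      exact (h i j hij h1.symm h2.symm).1 hM
    · intro hM i j hi hj hij
      obtain ⟨rfl, rfl⟩ := hb i k l hi
      obtain ⟨h1, h2⟩ := hb j _ _ hj
      exact (h i j hij h1.symm h2.symm).2 hM
    · intro hM i hi
      obtain ⟨rfl, rfl⟩ := hb i k l hi
      exact h0 i hM

lemma FGrid.inv {n t u : ℕ} {M : Fin t → Fin u → SignType} {π : Equiv.Perm (Fin n)}
    (h : FGrid M π) : FGrid (fun l k => M k l) π⁻¹ := by
  obtain ⟨f, g, hf, hg, h0, h⟩ := h
  refine ⟨g, f, hg, hf, fun v => by simpa using h0 (π⁻¹ v), ?_⟩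
  intro v w hvw h1 h2
  have hne : π⁻¹ v ≠ π⁻¹ w := fun e => hvw.ne (by simpa using e)
  have A := h (π⁻¹ v) (π⁻¹ w)
  have B := h (π⁻¹ w) (π⁻¹ v)
  simp only [perm_inv] at A B
  rw [h1, h2] at A
  refine ⟨fun hM => ?_, fun hM => ?_⟩
  · by_contra hcon
    have hlt := lt_of_le_of_ne (not_lt.mp hcon) hne.symm
    have := (B hlt h2.symm h1.symm).1 (by rw [← h2, ← h1]; exact hM)
    exact absurd hvw (not_lt.mpr this.le)
  · by_contra hcon
    have hlt := lt_of_le_of_ne (not_lt.mp hcon) hne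
    have := (A hlt rfl rfl).2 (by rw [← h2, ← h1]; exact hM)
    exact absurd hvw (not_lt.mpr this.le)

/-- A vertical alternation in the grid class of a matching is short. -/
lemma vert_short {n t u : ℕ} {M : Fin t → Fin u → SignType} {π : Equiv.Perm (Fin n)}
    (h : FGrid M π) (hM : ∀ (k : Fin t) (l l' : Fin u), M k l ≠ 0 → M k l' ≠ 0 → l = l')
    (hv : IsVerticalAlternation π) : n ≤ 2 * t := by
  obtain ⟨f, g, hf, hg, h0, h⟩ := h
  by_contra hn
  push Not at hn
  obtain ⟨a, b, hab, hfab⟩ := Fintype.exists_ne_map_eq_of_card_lt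
    (fun q : Fin (t + 1) => f ⟨2 * q, by omega⟩) (by simp)
  wlog hlt : a < b generalizing a b
  · exact this b a hab.symm hfab.symm (lt_of_le_of_ne (not_lt.mp hlt) hab.symm)
  have hlt' : (a : ℕ) < b := hlt
  have hb := b.isLt
  set x : Fin n := ⟨2 * a, by omega⟩ with hx
  set z' : Fin n := ⟨2 * b, by omega⟩ with hz'
  let y : Fin n := ⟨2 * a + 1, by omega⟩
  let z : Fin n := ⟨2 * a + 2, by omega⟩
  have hxy : x < y := by simp [x, y, Fin.lt_def]
  have hyz : y < z := by simp [z, y, Fin.lt_def]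
  have hzz : z ≤ z' := by simp [z, z', Fin.le_def]; omega
  have f1 : f x = f y := le_antisymm (hf hxy.le) (hfab ▸ hf (hyz.le.trans hzz))
  have f2 : f x = f z := le_antisymm (hf (hxy.trans hyz).le) (hfab ▸ hf hzz)
  have g1 : g (π x) = g (π y) := hM (f x) _ _ (h0 x) (f1 ▸ h0 y)
  have g2 : g (π x) = g (π z) := hM (f x) _ _ (h0 x) (f2 ▸ h0 z)
  have A := h x y hxy f1 g1
  have B := h y z hyz (f1.symm.trans f2) (g1.symm.trans g2)
  rw [← f1, ← g1] at B
  have hx2 : (x : ℕ) % 2 = 0 := by simp [x]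
  have hy2 : (y : ℕ) % 2 = 1 := by simp [y]
  have hz2 : (z : ℕ) % 2 = 0 := by simp [z]
  have hne := h0 x
  have cases : M (f x) (g (π x)) = 1 ∨ M (f x) (g (π x)) = -1 := by
    revert hne
    generalize M (f x) (g (π x)) = s
    revert s
    decide
  rcases hv.2 with hv | hv <;> have C1 := hv x y hx2 hy2 <;> have C2 := hv z y hz2 hy2 <;>
    rcases cases with c | c
  · exact absurd (B.1 c) (not_lt.mpr C2.le)
  · exact absurd (A.2 c) (not_lt.mpr C1.le)
  · exact absurd (A.1 c) (not_lt.mpr C1.le)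
  · exact absurd (B.2 c) (not_lt.mpr C2.le)

lemma PermContains.inv {k n : ℕ} {σ : Equiv.Perm (Fin k)} {π : Equiv.Perm (Fin n)}
    (h : PermContains σ π) : PermContains σ⁻¹ π⁻¹ := by
  obtain ⟨f, hf, h⟩ := h
  refine ⟨fun v => π (f (σ⁻¹ v)), ?_, ?_⟩
  · intro v w hvw
    rw [← h]
    simpa using hvw
  · intro i j
    simp [hf.lt_iff_lt]

lemma exists_std {k n : ℕ} (p : Fin k → Fin n) (hp : Function.Injective p) :
    ∃ σ : Equiv.Perm (Fin k), ∀ i j, σ i < σ j ↔ p i < p j := by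
  have hcard : (Finset.univ.image p).card = k := by
    rw [Finset.card_image_of_injective _ hp]; simp
  let e := (Finset.univ.image p).orderIsoOfFin hcard
  let s : Fin k → Fin k := fun i => e.symm ⟨p i, by simp⟩
  have hs : ∀ i j, s i < s j ↔ p i < p j := by
    intro i j
    simp [s]
  have hinj : Function.Injective s := by
    intro i j hij
    have h1 := hs i j
    have h2 := hs j i
    rw [hij] at h1 h2
    simp only [lt_self_iff_false, false_iff, not_lt] at h1 h2
    exact hp (le_antisymm h2 h1)
  exact ⟨Equiv.ofBijective s (Finite.injective_iff_bijective.mp hinj), hs⟩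

/-- Many switches between two rows produce a long vertical alternation. -/
lemma exists_alt {n u m : ℕ} (π : Equiv.Perm (Fin n)) (g : Fin n → Fin u) (hg : Monotone g)
    (l l' : Fin u) (hl : l ≠ l') (S : Finset (Fin n)) (hS : m ≤ S.card)
    (hS' : ∀ i ∈ S, g (π i) = l ∧ ∃ j : Fin n, (j : ℕ) = i + 1 ∧ g (π j) = l') :
    ∃ σ : Equiv.Perm (Fin (2 * m)), PermContains σ π ∧ IsVerticalAlternation σ := by
  obtain ⟨S', hsub, hcard⟩ := Finset.exists_subset_card_eq hS
  let e := S'.orderEmbOfFin hcard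
  have he : ∀ q, e q ∈ S := fun q => hsub (Finset.orderEmbOfFin_mem _ _ _)
  choose! nx hnx hnx' using fun i hi => (hS' i hi).2
  let h : Fin (2 * m) → Fin n := fun q =>
    if (q : ℕ) % 2 = 0 then e ⟨q / 2, by omega⟩ else nx (e ⟨q / 2, by omega⟩)
  have hval : ∀ q, (h q : ℕ) = e ⟨q / 2, by omega⟩ + q % 2 := by
    intro q
    simp only [h]
    split_ifs with hq
    · omega
    · rw [hnx _ (he _)]; omega
  have hg0 : ∀ q : Fin (2 * m), (q : ℕ) % 2 = 0 → g (π (h q)) = l := by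
    intro q hq
    simp only [h, if_pos hq]
    exact (hS' _ (he _)).1
  have hg1 : ∀ q : Fin (2 * m), (q : ℕ) % 2 = 1 → g (π (h q)) = l' := by
    intro q hq
    have : ¬ (q : ℕ) % 2 = 0 := by omega
    simp only [h, if_neg this]
    exact hnx' _ (he _)
  have hmono : StrictMono h := by
    intro p q hpq
    have hpq' : (p : ℕ) < q := hpq
    rw [Fin.lt_def]
    have hne : h p ≠ h q ∨ (p : ℕ) % 2 = q % 2 := by
      by_cases hpar : (p : ℕ) % 2 = q % 2
      · exact Or.inr hpar
      · left
        intro heq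
        rcases Nat.mod_two_eq_zero_or_one p with hp | hp
        · have h1 := hg0 p hp
          have h2 := hg1 q (by omega)
          rw [heq, h2] at h1
          exact hl h1.symm
        · have h1 := hg1 p hp
          have h2 := hg0 q (by omega)
          rw [heq, h2] at h1
          exact hl h1
    rw [ne_eq, Fin.ext_iff] at hne
    rw [hval, hval] at *
    rcases Nat.lt_or_ge ((p : ℕ) / 2) (q / 2) with hd | hd
    · have : e ⟨p / 2, by omega⟩ < e ⟨q / 2, by omega⟩ := by
        apply e.strictMono
        simpa [Fin.lt_def] using hd
      rw [Fin.lt_def] at this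
      omega
    · have hd' : (p : ℕ) / 2 = q / 2 := by omega
      simp only [hd']
      omega
  obtain ⟨σ, hσ⟩ := exists_std (fun q => π (h q)) (π.injective.comp hmono.injective)
  refine ⟨σ, ⟨h, hmono, hσ⟩, ⟨m, rfl⟩, ?_⟩
  rcases lt_or_gt_of_ne hl with hlt | hlt
  · left
    intro i j hi hj
    rw [hσ]
    apply hg.reflect_lt
    rw [hg0 i hi, hg1 j hj]
    exact hlt
  · right
    intro i j hi hj
    rw [hσ]
    apply hg.reflect_lt
    rw [hg0 i hi, hg1 j hj]
    exact hlt

open Classical in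
/-- The positions where the value-labelling `g` changes. -/
noncomputable def switches {n u : ℕ} (π : Equiv.Perm (Fin n)) (g : Fin n → Fin u) :
    Finset (Fin n) :=
  Finset.univ.filter fun i => ∃ j : Fin n, (j : ℕ) = i + 1 ∧ g (π i) ≠ g (π j)

lemma switches_card {n u m : ℕ} (C : ∀ n : ℕ, Set (Equiv.Perm (Fin n))) (hC : IsPermClass C)
    (halt : ∀ n, ∀ π ∈ C n, IsVerticalAlternation π → n < m)
    (π : Equiv.Perm (Fin n)) (hπ : π ∈ C n) (g : Fin n → Fin u) (hg : Monotone g) :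
    (switches π g).card ≤ u * u * m := by
  classical
  by_contra hcon
  push Not at hcon
  have hsw : ∀ i ∈ switches π g, ∃ j : Fin n, (j : ℕ) = i + 1 ∧ g (π i) ≠ g (π j) := by
    intro i hi
    simpa [switches] using hi
  choose! nx hnx hnx' using hsw
  obtain ⟨⟨l, l'⟩, -, hll⟩ := Finset.exists_lt_card_fiber_of_mul_lt_card_of_maps_to
    (s := switches π g) (t := (Finset.univ : Finset (Fin u × Fin u)))
    (f := fun i => (g (π i), g (π (nx i)))) (n := m) (fun _ _ => Finset.mem_univ _)
    (by simpa using hcon)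
  have hS' : ∀ i ∈ (switches π g).filter (fun i => (g (π i), g (π (nx i))) = (l, l')),
      i ∈ switches π g ∧ g (π i) = l ∧ g (π (nx i)) = l' := by
    intro i hi
    simpa using hi
  have hne : l ≠ l' := by
    obtain ⟨i, hi⟩ := Finset.card_pos.mp (lt_of_le_of_lt (Nat.zero_le _) hll)
    obtain ⟨h1, h2, h3⟩ := hS' i hi
    rw [← h2, ← h3]
    exact hnx' i h1
  obtain ⟨σ, h1, h2⟩ := exists_alt π g hg l l' hne _ hll.le
    (fun i hi => ⟨(hS' i hi).2.1, nx i, hnx i (hS' i hi).1, (hS' i hi).2.2⟩)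
  have := halt _ σ (hC _ _ σ π hπ h1) h2
  omega

open Classical in
/-- Positions `i` such that `i, i+1` do not carry consecutive values. -/
noncomputable def NB {n : ℕ} (π : Equiv.Perm (Fin n)) : Finset (Fin n) :=
  Finset.univ.filter fun i => ∃ j : Fin n, (j : ℕ) = i + 1 ∧
    (π j : ℕ) ≠ π i + 1 ∧ (π i : ℕ) ≠ π j + 1

lemma NB_card {n t u : ℕ} {M : Fin t → Fin u → SignType} {π : Equiv.Perm (Fin n)}
    (f : Fin n → Fin t) (g : Fin n → Fin u) (hf : Monotone f) (hg : Monotone g)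
    (h0 : ∀ i, M (f i) (g (π i)) ≠ 0)
    (h : ∀ i j, i < j → f i = f j → g (π i) = g (π j) →
      (M (f i) (g (π i)) = 1 → π i < π j) ∧ (M (f i) (g (π i)) = -1 → π j < π i)) :
    (NB π).card ≤ t + (switches π g).card + 2 * (switches π⁻¹ f).card := by
  classical
  let A : Finset (Fin n) := Finset.univ.filter fun i => ∃ j : Fin n, (j : ℕ) = i + 1 ∧ f i ≠ f j
  let D : Finset (Fin n) := (switches π⁻¹ f).image (fun v => π⁻¹ v)
  let E : Finset (Fin n) := Finset.univ.filter fun i => ∃ v ∈ switches π⁻¹ f, (π i : ℕ) = v + 1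
  have hA : A.card ≤ t := by
    have : A.card ≤ (Finset.univ : Finset (Fin t)).card := by
      apply Finset.card_le_card_of_injOn f (fun _ _ => Finset.mem_coe.mpr (Finset.mem_univ _))
      have key : ∀ x ∈ A, ∀ y, x < y → f x ≠ f y := by
        intro x hx y hxy heq
        simp only [A, Finset.mem_filter, Finset.mem_univ, true_and] at hx
        obtain ⟨j, hj, hne⟩ := hx
        have h1 : x ≤ j := by rw [Fin.le_def]; omega
        have h2 : j ≤ y := by rw [Fin.le_def]; rw [Fin.lt_def] at hxy; omega
        exact hne (le_antisymm (hf h1) (heq ▸ hf h2))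
      intro x hx y hy hxy
      rcases lt_trichotomy x y with hlt | rfl | hlt
      · exact absurd hxy (key x hx y hlt)
      · rfl
      · exact absurd hxy.symm (key y hy x hlt)
    simpa using this
  have hD : D.card ≤ (switches π⁻¹ f).card := Finset.card_image_le
  have hE : E.card ≤ (switches π⁻¹ f).card := by
    have hE' : ∀ i ∈ E, ∃ v ∈ switches π⁻¹ f, (π i : ℕ) = v + 1 := by
      intro i hi
      simpa [E] using hi
    choose! w hw hw' using hE'
    apply Finset.card_le_card_of_injOn w hw
    intro x hx y hy hxy
    have h1 := hw' x hx
    have h2 := hw' y hy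
    rw [hxy] at h1
    exact π.injective (Fin.ext (h1.trans h2.symm))
  have hsub : NB π ⊆ A ∪ switches π g ∪ (D ∪ E) := by
    intro i hi
    simp only [NB, Finset.mem_filter, Finset.mem_univ, true_and] at hi
    obtain ⟨j, hj, n1, n2⟩ := hi
    by_contra hcon
    simp only [Finset.mem_union, not_or] at hcon
    obtain ⟨⟨cA, cS⟩, cD, cE⟩ := hcon
    have fij : f i = f j := by
      by_contra hne
      exact cA (by simp only [A, Finset.mem_filter, Finset.mem_univ, true_and]; exact ⟨j, hj, hne⟩)
    have gij : g (π i) = g (π j) := by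
      by_contra hne
      exact cS (by
        simp only [switches, Finset.mem_filter, Finset.mem_univ, true_and]; exact ⟨j, hj, hne⟩)
    have hij : i < j := by rw [Fin.lt_def]; omega
    -- no point of the same cell has value strictly between
    have between : ∀ k, f k = f i → (π i < π k ∧ π k < π j) ∨ (π j < π k ∧ π k < π i) → False := by
      intro k hk hb
      have gk : g (π k) = g (π i) := by
        rcases hb with ⟨b1, b2⟩ | ⟨b1, b2⟩
        · exact le_antisymm (gij ▸ hg b2.le) (hg b1.le)
        · exact le_antisymm (hg b2.le) (gij ▸ hg b1.le)
      have cases : M (f i) (g (π i)) = 1 ∨ M (f i) (g (π i)) = -1 := by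
        have hne := h0 i
        revert hne
        generalize M (f i) (g (π i)) = s
        revert s
        decide
      have hki : k ≠ i := by rintro rfl; rcases hb with ⟨b1, b2⟩ | ⟨b1, b2⟩ <;> simp at b1 b2
      have hkj : k ≠ j := by rintro rfl; rcases hb with ⟨b1, b2⟩ | ⟨b1, b2⟩ <;> simp at b1 b2
      have X := h i j hij fij gij
      rcases lt_or_gt_of_ne hki with hlt | hlt
      · have Y := h k i hlt hk gk
        rw [hk, gk] at Y
        rcases cases with c | c
        · have := X.1 c; have := Y.1 c; omega
        · have := X.2 c; have := Y.2 c; omega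
      · have hjk : j < k := by
          rw [Fin.lt_def] at *
          have : (k : ℕ) ≠ j := fun e => hkj (Fin.ext e)
          omega
        have Y := h j k hjk (fij.symm.trans hk.symm) (gij.symm.trans gk.symm)
        rw [← fij, ← gij] at Y
        rcases cases with c | c
        · have := X.1 c; have := Y.1 c; omega
        · have := X.2 c; have := Y.2 c; omega
    have hne : (π i : ℕ) ≠ π j := fun e => hij.ne (π.injective (Fin.ext e))
    have bi := (π i).isLt
    have bj := (π j).isLt
    rcases lt_or_gt_of_ne hne with hlt | hlt
    · let v : Fin n := ⟨π i + 1, by omega⟩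
      apply between (π⁻¹ v)
      · by_contra hfv
        apply cD
        simp only [D, Finset.mem_image]
        refine ⟨π i, ?_, by simp⟩
        simp only [switches, Finset.mem_filter, Finset.mem_univ, true_and]
        exact ⟨v, rfl, by simpa using Ne.symm hfv⟩
      · left
        simp only [perm_inv, Fin.lt_def, v]
        omega
    · let v : Fin n := ⟨π i - 1, by omega⟩
      apply between (π⁻¹ v)
      · by_contra hfv
        apply cE
        simp only [E, Finset.mem_filter, Finset.mem_univ, true_and]
        have hv : (π i : ℕ) = v + 1 := by simp only [v]; omega
        refine ⟨v, ?_, hv⟩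
        simp only [switches, Finset.mem_filter, Finset.mem_univ, true_and]
        exact ⟨π i, hv, by simpa using hfv⟩
      · right
        simp only [perm_inv, Fin.lt_def, v]
        omega
  have h1 := Finset.card_le_card hsub
  have h2 := Finset.card_union_le (A ∪ switches π g) (D ∪ E)
  have h3 := Finset.card_union_le A (switches π g)
  have h4 := Finset.card_union_le D E
  omega

/-- Block index of a position. -/
noncomputable def blk {n : ℕ} (π : Equiv.Perm (Fin n)) (i : Fin n) : ℕ :=
  ((NB π).filter (· < i)).card

lemma blk_mono {n : ℕ} (π : Equiv.Perm (Fin n)) : Monotone (blk π) := by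
  intro i j hij
  apply Finset.card_le_card
  intro x
  simp only [Finset.mem_filter]
  exact fun hx => ⟨hx.1, hx.2.trans_le hij⟩

lemma blk_eq {n : ℕ} (π : Equiv.Perm (Fin n)) {i j : Fin n} (h : blk π i = blk π j)
    (x : Fin n) (hx : i ≤ x) (hx' : x < j) : x ∉ NB π := by
  intro hmem
  have hlt : blk π i < blk π j := by
    apply Finset.card_lt_card
    refine ⟨?_, ?_⟩
    · intro y
      simp only [Finset.mem_filter]
      exact fun hy => ⟨hy.1, (hy.2.trans_le hx).trans hx'⟩
    · intro hs
      have : x ∈ (NB π).filter (· < i) := hs (by simp [hmem, hx'])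
      simp only [Finset.mem_filter] at this
      exact absurd this.2 (not_lt.mpr hx)
  omega

lemma blk_succ {n : ℕ} (π : Equiv.Perm (Fin n)) {i j : Fin n} (hij : (j : ℕ) = i + 1)
    (h : i ∉ NB π) : blk π i = blk π j := by
  unfold blk
  congr 1
  ext x
  simp only [Finset.mem_filter, Fin.lt_def]
  constructor
  · exact fun hx => ⟨hx.1, by omega⟩
  · rintro ⟨hx, hx'⟩
    refine ⟨hx, ?_⟩
    have : (x : ℕ) ≠ i := fun e => h (Fin.ext e ▸ hx)
    omega

lemma bond {n : ℕ} (π : Equiv.Perm (Fin n)) {i j : Fin n} (hij : (j : ℕ) = i + 1)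
    (h : i ∉ NB π) : (π j : ℕ) = π i + 1 ∨ (π i : ℕ) = π j + 1 := by
  simp only [NB, Finset.mem_filter, Finset.mem_univ, true_and, not_exists] at h
  have := h j
  tauto

lemma blk_inv_succ {n : ℕ} (π : Equiv.Perm (Fin n)) {i j : Fin n} (hij : (j : ℕ) = i + 1)
    (h : i ∉ NB π) : blk π⁻¹ (π i) = blk π⁻¹ (π j) := by
  rcases bond π hij h with hb | hb
  · apply blk_succ _ hb
    simp only [NB, Finset.mem_filter, Finset.mem_univ, true_and, not_exists]
    intro w ⟨hw, h1, h2⟩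
    have : w = π j := Fin.ext (hw.trans hb.symm)
    subst this
    simp [hij] at h1
  · symm
    apply blk_succ _ hb
    simp only [NB, Finset.mem_filter, Finset.mem_univ, true_and, not_exists]
    intro w ⟨hw, h1, h2⟩
    have : w = π i := Fin.ext (hw.trans hb.symm)
    subst this
    simp [hij] at h2

lemma blk_run {n : ℕ} (π : Equiv.Perm (Fin n)) (i : Fin n) (d : ℕ) (hd : i + d < n)
    (h : ∀ x, i ≤ x → (x : ℕ) < i + d → x ∉ NB π) :
    blk π⁻¹ (π i) = blk π⁻¹ (π ⟨i + d, hd⟩) ∧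
    ((∀ x : Fin n, i ≤ x → (x : ℕ) ≤ i + d → (π x : ℕ) + i = π i + x) ∨
     (∀ x : Fin n, i ≤ x → (x : ℕ) ≤ i + d → (π x : ℕ) + x = π i + i)) := by
  induction d with
  | zero =>
    refine ⟨rfl, Or.inl ?_⟩
    intro x h1 h2
    have : x = i := Fin.ext (by rw [Fin.le_def] at h1; omega)
    subst this
    rfl
  | succ d ih =>
    have hid : (i : ℕ) + d < n := by omega
    obtain ⟨e, ih⟩ := ih hid (fun x h1 h2 => h x h1 (by omega))
    have hnb := h ⟨i + d, hid⟩ (by simp [Fin.le_def]) (by simp)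
    have hs : ((⟨i + (d + 1), hd⟩ : Fin n) : ℕ) = (⟨i + d, hid⟩ : Fin n) + 1 := by
      simp only; omega
    refine ⟨e.trans (blk_inv_succ π hs hnb), ?_⟩
    have hb := bond π hs hnb
    have split : ∀ x : Fin n, (x : ℕ) ≤ i + (d + 1) →
        (x : ℕ) ≤ i + d ∨ x = ⟨i + (d + 1), hd⟩ := by
      intro x hx
      rcases Nat.lt_or_ge (i + d) x with h | h
      · right; apply Fin.ext; simp; omega
      · exact Or.inl h
    have hprev : d ≠ 0 → ∃ k : Fin n, (k : ℕ) + 1 = i + d ∧ i ≤ k ∧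
        (π k : ℕ) ≠ π ⟨i + (d + 1), hd⟩ := by
      intro hd0
      refine ⟨⟨i + (d - 1), by omega⟩, by simp; omega, by simp [Fin.le_def], ?_⟩
      intro e
      have := π.injective (Fin.ext e)
      rw [Fin.ext_iff] at this
      simp at this
    rcases Nat.eq_zero_or_pos d with rfl | hpos
    · simp only [Nat.add_zero, Fin.eta] at hb
      rcases hb with hb | hb
      · left
        intro x h1 h2
        rcases split x h2 with h3 | rfl
        · have : x = i := Fin.ext (by rw [Fin.le_def] at h1; omega)
          subst this; rfl
        · simp only; omega
      · right
        intro x h1 h2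
        rcases split x h2 with h3 | rfl
        · have : x = i := Fin.ext (by rw [Fin.le_def] at h1; omega)
          subst this; rfl
        · simp only; omega
    · obtain ⟨k, hk1, hk2, hk3⟩ := hprev (by omega)
      clear hprev
      rcases ih with ih | ih
      · left
        have e1 := ih k hk2 (by omega)
        have e2 := ih ⟨i + d, hid⟩ (by simp [Fin.le_def]) (by simp)
        simp only at e2
        intro x h1 h2
        rcases split x h2 with h3 | rfl
        · exact ih x h1 h3
        · simp only; omega
      · right
        have e1 := ih k hk2 (by omega)
        have e2 := ih ⟨i + d, hid⟩ (by simp [Fin.le_def]) (by simp)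
        simp only at e2
        intro x h1 h2
        rcases split x h2 with h3 | rfl
        · exact ih x h1 h3
        · simp only; omega

lemma blk_run' {n : ℕ} (π : Equiv.Perm (Fin n)) {i j : Fin n} (hij : i ≤ j)
    (h : blk π i = blk π j) :
    blk π⁻¹ (π i) = blk π⁻¹ (π j) ∧
    ((∀ x : Fin n, i ≤ x → x ≤ j → (π x : ℕ) + i = π i + x) ∨
     (∀ x : Fin n, i ≤ x → x ≤ j → (π x : ℕ) + x = π i + i)) := by
  have hij' : (i : ℕ) ≤ j := hij
  have hj : (i : ℕ) + (j - i) = j := by omega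
  have := blk_run π i (j - i) (by omega) (fun x h1 h2 => blk_eq π h x h1 (by
    rw [Fin.lt_def]; omega))
  simpa only [hj, Fin.eta, ← Fin.le_def] using this

lemma blk_inv_eq {n : ℕ} (π : Equiv.Perm (Fin n)) {i j : Fin n}
    (h : blk π i = blk π j) : blk π⁻¹ (π i) = blk π⁻¹ (π j) := by
  rcases le_total i j with hij | hij
  · exact (blk_run' π hij h).1
  · exact (blk_run' π hij h.symm).1.symm

lemma blk_inv_eq' {n : ℕ} (π : Equiv.Perm (Fin n)) {v w : Fin n}
    (h : blk π⁻¹ v = blk π⁻¹ w) : blk π (π⁻¹ v) = blk π (π⁻¹ w) := by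
  simpa using blk_inv_eq π⁻¹ h

/-- The block with index `a` is increasing. -/
def incr {n : ℕ} (π : Equiv.Perm (Fin n)) (a : ℕ) : Prop :=
  ∀ i j, i < j → blk π i = a → blk π j = a → π i < π j

lemma decr_of_not_incr {n : ℕ} (π : Equiv.Perm (Fin n)) (a : ℕ) (h : ¬ incr π a)
    (i j : Fin n) (hij : i < j) (hi : blk π i = a) (hj : blk π j = a) : π j < π i := by
  unfold incr at h
  push Not at h
  obtain ⟨i', j', hij', hi', hj', hle⟩ := h
  have e : blk π (min i i') = blk π (max j j') := by
    rcases min_choice i i' with h1 | h1 <;> rcases max_choice j j' with h2 | h2 <;>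
      rw [h1, h2] <;> simp [*]
  have hmm : min i i' ≤ max j j' := (min_le_left _ _).trans (hij.le.trans (le_max_left _ _))
  obtain ⟨-, hr⟩ := blk_run' π hmm e
  have q1 : min i i' ≤ i := min_le_left _ _
  have q2 : min i i' ≤ i' := min_le_right _ _
  have q3 : j ≤ max j j' := le_max_left _ _
  have q4 : j' ≤ max j j' := le_max_right _ _
  rcases hr with hr | hr <;>
  · have a1 := hr i q1 (hij.le.trans q3)
    have a2 := hr j (q1.trans hij.le) q3
    have a3 := hr i' q2 (hij'.le.trans q4)
    have a4 := hr j' (q2.trans hij'.le) q4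
    simp only [Fin.lt_def, Fin.le_def] at *
    omega

/-- Index type of the universal matching. -/
abbrev Idx (B : ℕ) := Fin B ×ₗ (Fin B ×ₗ Bool)

lemma idx_card (B : ℕ) : Fintype.card (Idx B) = B * (B * 2) := by
  have h : Fintype.card (Idx B) = Fintype.card (Fin B × Fin B × Bool) :=
    Fintype.card_congr ((ofLex).trans ((Equiv.refl _).prodCongr ofLex))
  rw [h]
  simp

/-- Signs of the universal matching. -/
def uMatL (B : ℕ) (x y : Idx B) : SignType :=
  if (ofLex x).1 = (ofLex (ofLex y).2).1 ∧ (ofLex (ofLex x).2).1 = (ofLex y).1 ∧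
    (ofLex (ofLex x).2).2 = (ofLex (ofLex y).2).2 then
    (if (ofLex (ofLex x).2).2 then 1 else -1) else 0

/-- The universal matching. -/
noncomputable def uMat (B : ℕ) : Fin (B * (B * 2)) → Fin (B * (B * 2)) → SignType :=
  fun k l => uMatL B (Fintype.orderIsoFinOfCardEq _ (idx_card B) k)
    (Fintype.orderIsoFinOfCardEq _ (idx_card B) l)

lemma uMatL_ne {B : ℕ} {x y : Idx B} (h : uMatL B x y ≠ 0) :
    (ofLex x).1 = (ofLex (ofLex y).2).1 ∧ (ofLex (ofLex x).2).1 = (ofLex y).1 ∧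
    (ofLex (ofLex x).2).2 = (ofLex (ofLex y).2).2 := by
  by_contra hcon
  exact h (by rw [uMatL, if_neg hcon])

lemma uMat_matching (B : ℕ) : IsMatchingMat (uMat B) := by
  constructor
  · intro k l l' h h'
    obtain ⟨a1, a2, a3⟩ := uMatL_ne h
    obtain ⟨b1, b2, b3⟩ := uMatL_ne h'
    apply (Fintype.orderIsoFinOfCardEq _ (idx_card B)).injective
    exact congrArg toLex (Prod.ext (a2.symm.trans b2)
      (congrArg toLex (Prod.ext (a1.symm.trans b1) (a3.symm.trans b3))))
  · intro k k' l h h'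
    obtain ⟨a1, a2, a3⟩ := uMatL_ne h
    obtain ⟨b1, b2, b3⟩ := uMatL_ne h'
    apply (Fintype.orderIsoFinOfCardEq _ (idx_card B)).injective
    exact congrArg toLex (Prod.ext (a1.trans b1.symm)
      (congrArg toLex (Prod.ext (a2.trans b2.symm) (a3.trans b3.symm))))

lemma blk_lt {n B : ℕ} {π : Equiv.Perm (Fin n)} (h : (NB π).card < B) (i : Fin n) :
    blk π i < B := lt_of_le_of_lt (Finset.card_filter_le _ _) h

open Classical in
lemma uMat_grid {n B : ℕ} (π : Equiv.Perm (Fin n)) (h1 : (NB π).card < B)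
    (h2 : (NB π⁻¹).card < B) : FGrid (uMat B) π := by
  let e := Fintype.orderIsoFinOfCardEq _ (idx_card B)
  let F : Fin n → Idx B := fun i => toLex (⟨blk π i, blk_lt h1 i⟩,
    toLex (⟨blk π⁻¹ (π i), blk_lt h2 _⟩, decide (incr π (blk π i))))
  let G : Fin n → Idx B := fun v => toLex (⟨blk π⁻¹ v, blk_lt h2 v⟩,
    toLex (⟨blk π (π⁻¹ v), blk_lt h1 _⟩, decide (incr π (blk π (π⁻¹ v)))))
  have hF : Monotone F := by
    intro i j hij
    rw [Prod.Lex.toLex_le_toLex]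
    rcases (blk_mono π hij).lt_or_eq with h | h
    · exact Or.inl h
    · right
      refine ⟨Fin.ext h, ?_⟩
      simp only [h, blk_inv_eq π h, le_refl]
  have hG : Monotone G := by
    intro i j hij
    rw [Prod.Lex.toLex_le_toLex]
    rcases (blk_mono π⁻¹ hij).lt_or_eq with h | h
    · exact Or.inl h
    · right
      refine ⟨Fin.ext h, ?_⟩
      simp only [blk_inv_eq' π h, le_refl]
  have hM : ∀ i, uMat B (e.symm (F i)) (e.symm (G (π i))) =
      if incr π (blk π i) then 1 else -1 := by
    intro i
    simp only [uMat, e, OrderIso.apply_symm_apply]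
    simp [uMatL, F, G]
  refine ⟨fun i => e.symm (F i), fun v => e.symm (G v), e.symm.monotone.comp hF,
    e.symm.monotone.comp hG, ?_, ?_⟩
  · intro i
    rw [hM]
    split_ifs <;> decide
  · intro i j hij hf _
    have hFF : F i = F j := e.symm.injective hf
    have hb : blk π i = blk π j := by
      have := congrArg (fun x => ((ofLex x).1 : ℕ)) hFF
      simpa [F] using this
    rw [hM]
    split_ifs with hin
    · exact ⟨fun _ => hin i j hij rfl hb.symm, fun h => absurd h (by decide)⟩
    · exact ⟨fun h => absurd h (by decide),
        fun _ => decr_of_not_incr π _ hin i j hij rfl hb.symm⟩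

/-- **Proposition.** A griddable permutation class lies in the grid class of a matching if
and only if it does not contain arbitrarily long alternations. -/
theorem griddable_matching_iff_no_long_alternations
    (C : ∀ n : ℕ, Set (Equiv.Perm (Fin n))) (hC : IsPermClass C)
    (hgrid : ∃ (t u : ℕ) (M : Fin t → Fin u → SignType), ∀ n : ℕ, ∀ π ∈ C n, InGrid M π) :
    (∃ (t u : ℕ) (M : Fin t → Fin u → SignType), IsMatchingMat M ∧
        ∀ n : ℕ, ∀ π ∈ C n, InGrid M π) ↔
      ¬ ContainsArbitrarilyLongAlternations C := by
  constructor
  · rintro ⟨t, u, M, hM, hall⟩ hcon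
    obtain ⟨n, π, hπ, hn, hv⟩ := hcon (2 * t + 2 * u + 1)
    have hF := (inGrid_iff M π).1 (hall n π hπ)
    rcases hv with hv | hv
    · have := vert_short hF hM.1 hv
      omega
    · have := vert_short hF.inv (fun l k k' => hM.2 k k' l) hv
      omega
  · intro hno
    unfold ContainsArbitrarilyLongAlternations at hno
    push Not at hno
    obtain ⟨m, hm⟩ := hno
    obtain ⟨t, u, M, hall⟩ := hgrid
    let C' : ∀ n : ℕ, Set (Equiv.Perm (Fin n)) := fun n => {π | π⁻¹ ∈ C n}
    have hC' : IsPermClass C' := fun k n σ π hπ hc => hC k n σ⁻¹ π⁻¹ hπ hc.inv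
    have alt : ∀ n, ∀ π ∈ C n, IsVerticalAlternation π → n < m := by
      intro n π hπ hv
      by_contra hcon
      exact (hm n π hπ (not_lt.mp hcon)).1 hv
    have alt' : ∀ n, ∀ π ∈ C' n, IsVerticalAlternation π → n < m := by
      intro n π hπ hv
      by_contra hcon
      exact (hm n π⁻¹ hπ (not_lt.mp hcon)).2 (by simpa using hv)
    refine ⟨_, _, uMat (t + u + 2 * (u * u * m) + 2 * (t * t * m) + 1), uMat_matching _, ?_⟩
    intro n π hπ
    rw [inGrid_iff]
    have hF := (inGrid_iff M π).1 (hall n π hπ)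
    have hπ' : π⁻¹ ∈ C' n := by simpa [C'] using hπ
    apply uMat_grid
    · obtain ⟨f, g, hf, hg, h0, h⟩ := hF
      have := NB_card f g hf hg h0 h
      have := switches_card C hC alt π hπ g hg
      have := switches_card C' hC' alt' π⁻¹ hπ' f hf
      omega
    · obtain ⟨f, g, hf, hg, h0, h⟩ := hF.inv
      have := NB_card (M := fun l k => M k l) f g hf hg h0 h
      have := switches_card C' hC' alt' π⁻¹ hπ' g hg
      have := switches_card C hC alt π hπ f hf
      rw [inv_inv] at *
      omega
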